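/- Define ψ : ℝ → ℝ by ψ(ξ) = 2·∫₀^{1/e} (1 − cos(ξx))·log(1/x)·x^{−1} dx, and let μ be the measure on ℝ with density dμ/dξ = (1 + |ξ|)^{−1} with respect to Lebesgue measure. Then: (i) ∫_ℝ (1 + ψ(ξ))^{−1} μ(dξ) < ∞ (Dalang's condition holds); (ii) for every a ∈ (0, 1/2): ∫_ℝ ψ(ξ)^{a}·(1 + ψ(ξ))^{−1} μ(dξ) < ∞; and (iii) for every b > 0: ∫_ℝ |ξ|^{2b}·(1 + ψ(ξ))^{−1} μ(dξ) = ∞. In particular there exists a ∈ (0,1) for which ∫_ℝ ψ^{a}·(1+ψ)^{−1} dμ < ∞ while ∫_ℝ |ξ|^{2b}·(1+ψ)^{−1} dμ = ∞ for every b ∈ (0,1), so that the temporal regularity index ind_H is strictly positive while the spatial regularity index ind_L equals zero. -/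

import Mathlib

open MeasureTheory Set

/-- The characteristic exponent of the symmetric Lévy process with Lévy measure
`ν(dx) = |x|⁻¹ log(1/|x|) 1_{0<|x|<1/e} dx`. -/
noncomputable def psiEx (ξ : ℝ) : ℝ :=
  2 * ∫ x in Ioo (0 : ℝ) (Real.exp 1)⁻¹, (1 - Real.cos (ξ * x)) * Real.log (1 / x) / x

/-- The spectral measure with density `(1+|ξ|)⁻¹` with respect to Lebesgue measure. -/
noncomputable def muEx : Measure ℝ :=
  volume.withDensity fun ξ => ENNReal.ofReal (1 / (1 + |ξ|))

theorem mul_neg_log_le_one {x : ℝ} (hx : 0 < x) : x * Real.log (1 / x) ≤ 1 := by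
  have h := Real.log_le_sub_one_of_pos (one_div_pos.2 hx)
  calc x * Real.log (1 / x) ≤ x * (1 / x - 1) := by gcongr
    _ = 1 - x := by field_simp
    _ ≤ 1 := by linarith

theorem inv_exp_one_lt_one : (Real.exp 1)⁻¹ < 1 :=
  inv_lt_one_of_one_lt₀ (Real.one_lt_exp_iff.2 one_pos)

theorem log_one_div_nonneg {x : ℝ} (hx : 0 < x) (hx1 : x ≤ 1) : 0 ≤ Real.log (1 / x) :=
  Real.log_nonneg ((one_le_div hx).2 hx1)

theorem psi_integrand_nonneg (ξ : ℝ) {x : ℝ} (hx : 0 ≤ x) (hx1 : x ≤ 1) :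
    0 ≤ (1 - Real.cos (ξ * x)) * Real.log (1 / x) / x := by
  rcases hx.eq_or_lt with rfl | hx
  · simp
  · have h1 := log_one_div_nonneg hx hx1
    have h2 : 0 ≤ 1 - Real.cos (ξ * x) := sub_nonneg.2 (Real.cos_le_one _)
    positivity

theorem integrableOn_psi_integrand (ξ : ℝ) :
    IntegrableOn (fun x : ℝ => (1 - Real.cos (ξ * x)) * Real.log (1 / x) / x)
      (Ioo (0 : ℝ) (Real.exp 1)⁻¹) := by
  refine Measure.integrableOn_of_bounded (M := ξ ^ 2 / 2) (by simp) ?_ ?_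
  · exact Measurable.aestronglyMeasurable (by fun_prop)
  · filter_upwards [ae_restrict_mem measurableSet_Ioo] with x hx
    have hx1 := hx.2.le.trans inv_exp_one_lt_one.le
    rw [Real.norm_of_nonneg (psi_integrand_nonneg ξ hx.1.le hx1), div_le_iff₀ hx.1]
    have h1 := log_one_div_nonneg hx.1 hx1
    have h2 := mul_neg_log_le_one hx.1
    have h3 : 1 - Real.cos (ξ * x) ≤ (ξ * x) ^ 2 / 2 := by
      linarith [Real.one_sub_sq_div_two_le_cos (x := ξ * x)]
    calc (1 - Real.cos (ξ * x)) * Real.log (1 / x) ≤ (ξ * x) ^ 2 / 2 * Real.log (1 / x) := by gcongr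
      _ = ξ ^ 2 / 2 * x * (x * Real.log (1 / x)) := by ring
      _ ≤ ξ ^ 2 / 2 * x * 1 := by
        have := hx.1
        gcongr
      _ = ξ ^ 2 / 2 * x := mul_one _

theorem psiEx_nonneg (ξ : ℝ) : 0 ≤ psiEx ξ :=
  mul_nonneg zero_le_two <| setIntegral_nonneg measurableSet_Ioo fun _ hx =>
    psi_integrand_nonneg ξ hx.1.le (hx.2.le.trans inv_exp_one_lt_one.le)

theorem psiEx_neg (ξ : ℝ) : psiEx (-ξ) = psiEx ξ := by simp [psiEx]

theorem psiEx_abs (ξ : ℝ) : psiEx |ξ| = psiEx ξ := by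
  rcases abs_choice ξ with h | h <;> simp [h, psiEx_neg]

theorem log_one_div_div_le {x y : ℝ} (hx : 0 < x) (hxy : x ≤ y) (hy : y ≤ 1) :
    Real.log (1 / y) / y ≤ Real.log (1 / x) / x := by
  have hy0 := hx.trans_le hxy
  have h := log_one_div_nonneg hx (hxy.trans hy)
  have : Real.log (1 / y) ≤ Real.log (1 / x) :=
    Real.log_le_log (by positivity) (one_div_le_one_div_of_le hx hxy)
  gcongr

theorem integral_log_one_div_div {c d : ℝ} (hc : 0 < c) (hcd : c ≤ d) :
    ∫ x in c..d, Real.log (1 / x) / x = (Real.log c ^ 2 - Real.log d ^ 2) / 2 := by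
  have hpos : ∀ x ∈ uIcc c d, 0 < x := fun x hx => by
    rw [uIcc_of_le hcd] at hx
    exact hc.trans_le hx.1
  rw [intervalIntegral.integral_eq_sub_of_hasDerivAt (f := fun x => -(Real.log x ^ 2) / 2)]
  · ring
  · intro x hx
    have h := (((Real.hasDerivAt_log (hpos x hx).ne').pow 2).neg).div_const 2
    refine h.congr_deriv ?_
    rw [one_div, Real.log_inv]
    simp
    ring
  · refine ContinuousOn.intervalIntegrable fun x hx => ContinuousAt.continuousWithinAt ?_
    have := (hpos x hx).ne'
    have h2 : (1 / x) ≠ 0 := one_div_ne_zero this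
    fun_prop (disch := assumption)

/-- Averaging the integrand of `psiEx` with its shift by half a period of the cosine gives the
logarithmic lower bound. -/
theorem sq_log_sub_le_one_add_psiEx {ξ : ℝ} (hξ : Real.pi * Real.exp 1 ≤ ξ) :
    (Real.log ξ - Real.log Real.pi) ^ 2 ≤ 1 + psiEx ξ := by
  have hπ := Real.pi_pos
  have he := Real.exp_pos 1
  have hξ0 : 0 < ξ := lt_of_lt_of_le (by positivity) hξ
  set c := Real.pi / ξ with hc
  set d := (Real.exp 1)⁻¹ with hd
  have hd1 : d < 1 := inv_exp_one_lt_one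
  have hd0 : 0 < d := inv_pos.2 he
  have hc0 : 0 < c := by positivity
  have hcd : c ≤ d := by
    rw [hc, hd, div_le_iff₀ hξ0, inv_mul_eq_div, le_div_iff₀ he]
    exact hξ
  let f : ℝ → ℝ := fun x => (1 - Real.cos (ξ * x)) * Real.log (1 / x) / x
  let g : ℝ → ℝ := fun x => Real.log (1 / x) / x
  have hint : IntervalIntegrable f volume 0 d := by
    rw [intervalIntegrable_iff_integrableOn_Ioo_of_le hd0.le]
    exact integrableOn_psi_integrand ξ
  have hpsi : psiEx ξ = 2 * ∫ x in (0 : ℝ)..d, f x := by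
    rw [psiEx, intervalIntegral.integral_of_le hd0.le, integral_Ioc_eq_integral_Ioo]
  have hf0 : 0 ≤ᵐ[volume.restrict (Ioc 0 d)] f := by
    filter_upwards [ae_restrict_mem measurableSet_Ioc] with x hx
    exact psi_integrand_nonneg ξ hx.1.le (hx.2.trans hd1.le)
  have h1 : ∫ x in c..d, f x ≤ ∫ x in (0 : ℝ)..d, f x :=
    intervalIntegral.integral_mono_interval hc0.le hcd le_rfl hf0 hint
  have h2 : ∫ x in (0 : ℝ)..(d - c), f x ≤ ∫ x in (0 : ℝ)..d, f x :=
    intervalIntegral.integral_mono_interval le_rfl (by linarith) (by linarith) hf0 hint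
  have hint1 : IntervalIntegrable f volume c d :=
    hint.mono_set (by rw [uIcc_of_le hcd, uIcc_of_le hd0.le]; exact Icc_subset_Icc_left hc0.le)
  have hint2 : IntervalIntegrable f volume 0 (d - c) :=
    hint.mono_set (by
      rw [uIcc_of_le (by linarith), uIcc_of_le hd0.le]
      exact Icc_subset_Icc_right (by linarith))
  have hint3 : IntervalIntegrable (fun x => f (x + c)) volume 0 (d - c) := by
    simpa using hint1.comp_add_right c
  have hintg : IntervalIntegrable g volume c d := by
    refine ContinuousOn.intervalIntegrable fun x hx => ContinuousAt.continuousWithinAt ?_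
    rw [uIcc_of_le hcd] at hx
    have : x ≠ 0 := (hc0.trans_le hx.1).ne'
    have h2 : (1 / x) ≠ 0 := one_div_ne_zero this
    fun_prop (disch := assumption)
  have hint4 : IntervalIntegrable (fun x => g (x + c)) volume 0 (d - c) := by
    simpa using hintg.comp_add_right c
  have h3 : ∫ x in (0 : ℝ)..(d - c), f (x + c) = ∫ x in c..d, f x := by simp
  have h4 : ∫ x in (0 : ℝ)..(d - c), g (x + c) = ∫ x in c..d, g x := by simp
  have h5 : ∫ x in (0 : ℝ)..(d - c), 2 * g (x + c) ≤
      ∫ x in (0 : ℝ)..(d - c), (f x + f (x + c)) := by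
    refine intervalIntegral.integral_mono_on_of_le_Ioo (by linarith) (hint4.const_mul 2)
      (hint2.add hint3) fun x hx => ?_
    have hcos : Real.cos (ξ * (x + c)) = -Real.cos (ξ * x) := by
      rw [show ξ * (x + c) = ξ * x + Real.pi by rw [hc]; field_simp, Real.cos_add_pi]
    have hg : g (x + c) ≤ g x :=
      log_one_div_div_le hx.1 (by linarith) (by linarith [hx.2])
    have hf : f x = (1 - Real.cos (ξ * x)) * g x := mul_div_assoc _ _ _
    have hfc : f (x + c) = (1 + Real.cos (ξ * x)) * g (x + c) := by
      simp only [f, g, hcos]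
      ring
    rw [hf, hfc]
    nlinarith [mul_le_mul_of_nonneg_left hg (sub_nonneg.2 (Real.cos_le_one (ξ * x)))]
  rw [intervalIntegral.integral_const_mul, intervalIntegral.integral_add hint2 hint3, h3, h4,
    integral_log_one_div_div hc0 hcd] at h5
  have hlogc : Real.log c = Real.log Real.pi - Real.log ξ := Real.log_div hπ.ne' hξ0.ne'
  have hlogd : Real.log d = -1 := by rw [hd, Real.log_inv, Real.log_exp]
  rw [hlogc, hlogd] at h5
  rw [hpsi]
  nlinarith

theorem one_sub_cos_le_two_mul_rpow {y b : ℝ} (hy : 0 ≤ y) (hb0 : 0 ≤ b) (hb : b ≤ 1) :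
    1 - Real.cos y ≤ 2 * y ^ b := by
  rcases le_total y 1 with h | h
  · have h1 : y ≤ y ^ b := by
      rcases hy.eq_or_lt with rfl | hy0
      · positivity
      · simpa using Real.rpow_le_rpow_of_exponent_ge hy0 h hb
    nlinarith [Real.one_sub_sq_div_two_le_cos (x := y)]
  · linarith [Real.one_le_rpow h hb0, Real.neg_one_le_cos y]

theorem exists_psiEx_le_mul_rpow {b : ℝ} (hb0 : 0 < b) (hb : b ≤ 1) :
    ∃ C, 0 ≤ C ∧ ∀ ξ, 0 ≤ ξ → psiEx ξ ≤ C * ξ ^ b := by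
  have hint : IntegrableOn (fun x : ℝ => x ^ (b / 2 - 1)) (Ioo (0 : ℝ) (Real.exp 1)⁻¹) := by
    rw [← intervalIntegrable_iff_integrableOn_Ioo_of_le (by positivity)]
    exact intervalIntegral.intervalIntegrable_rpow' (by linarith)
  have hI : 0 ≤ ∫ x in Ioo (0 : ℝ) (Real.exp 1)⁻¹, x ^ (b / 2 - 1) :=
    setIntegral_nonneg measurableSet_Ioo fun x hx => Real.rpow_nonneg hx.1.le _
  refine ⟨2 * (4 / b * ∫ x in Ioo (0 : ℝ) (Real.exp 1)⁻¹, x ^ (b / 2 - 1)), by positivity,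
    fun ξ hξ => ?_⟩
  rw [psiEx, mul_assoc, mul_right_comm]
  refine mul_le_mul_of_nonneg_left ?_ zero_le_two
  rw [← integral_const_mul]
  refine setIntegral_mono_on (integrableOn_psi_integrand ξ) (hint.const_mul _)
    measurableSet_Ioo fun x hx => ?_
  have hx0 := hx.1
  have h1 := one_sub_cos_le_two_mul_rpow (mul_nonneg hξ hx0.le) hb0.le hb
  have h2 := log_one_div_nonneg hx0 (hx.2.le.trans inv_exp_one_lt_one.le)
  have h3 : Real.log (1 / x) ≤ (1 / x) ^ (b / 2) / (b / 2) :=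
    Real.log_le_rpow_div (by positivity) (by positivity)
  calc (1 - Real.cos (ξ * x)) * Real.log (1 / x) / x
      ≤ 2 * (ξ * x) ^ b * ((1 / x) ^ (b / 2) / (b / 2)) / x := by gcongr
    _ = 4 / b * ξ ^ b * x ^ (b / 2 - 1) := by
      rw [Real.mul_rpow hξ hx0.le, one_div, Real.inv_rpow hx0.le, Real.rpow_sub_one hx0.ne',
        show x ^ b = x ^ (b / 2) * x ^ (b / 2) by rw [← Real.rpow_add hx0]; ring_nf]
      have := Real.rpow_pos_of_pos hx0 (b / 2)
      field_simp
      ring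

theorem lintegral_muEx (F : ℝ → ℝ) :
    ∫⁻ ξ, ENNReal.ofReal (F ξ) ∂muEx = ∫⁻ ξ, ENNReal.ofReal (F ξ / (1 + |ξ|)) := by
  rw [muEx, lintegral_withDensity_eq_lintegral_mul_non_measurable _ (by fun_prop) (by simp)]
  refine lintegral_congr fun ξ => ?_
  rw [Pi.mul_apply, ← ENNReal.ofReal_mul (by positivity), one_div_mul_eq_div]

theorem pi_mul_exp_one_lt_ten : Real.pi * Real.exp 1 < 10 := by
  nlinarith [Real.pi_lt_d2, Real.exp_one_lt_d9, Real.pi_pos, Real.exp_pos 1]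

theorem one_le_log_sub_log_pi {t : ℝ} (ht : 10 ≤ t) : 1 ≤ Real.log t - Real.log Real.pi := by
  have h := Real.log_le_log (by positivity) (pi_mul_exp_one_lt_ten.le.trans ht)
  rw [Real.log_mul Real.pi_ne_zero (Real.exp_ne_zero 1), Real.log_exp] at h
  linarith

theorem integrableOn_log_sub_rpow_div {s : ℝ} (hs : s < -1) :
    IntegrableOn (fun t : ℝ => (Real.log t - Real.log Real.pi) ^ s / t) (Ioi 10) := by
  have hne : s + 1 ≠ 0 := by linarith
  refine integrableOn_Ioi_deriv_of_nonneg' (l := 0 / (s + 1))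
    (g := fun t => (Real.log t - Real.log Real.pi) ^ (s + 1) / (s + 1)) ?_ ?_ ?_
  · intro t ht
    have h1 := one_le_log_sub_log_pi ht
    have ht0 : t ≠ 0 := by linarith [mem_Ici.1 ht]
    have h := (((Real.hasDerivAt_log ht0).sub_const (Real.log Real.pi)).rpow_const
      (p := s + 1) (Or.inl (by linarith))).div_const (s + 1)
    refine h.congr_deriv ?_
    rw [add_sub_cancel_right]
    field_simp
  · intro t ht
    have h1 := one_le_log_sub_log_pi (mem_Ioi.1 ht).le
    have ht0 : 0 < t := by linarith [mem_Ioi.1 ht]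
    exact div_nonneg (Real.rpow_nonneg (by linarith) _) ht0.le
  · refine Filter.Tendsto.div_const ?_ _
    have h := (tendsto_rpow_neg_atTop (y := -(s + 1)) (by linarith)).comp
      (Filter.tendsto_atTop_add_const_right _ (-Real.log Real.pi) Real.tendsto_log_atTop)
    simpa [Function.comp_def, sub_eq_add_neg] using h

theorem lintegral_one_add_psiEx_rpow_lt_top {a : ℝ} (ha : a < 1 / 2) :
    ∫⁻ ξ, ENNReal.ofReal ((1 + psiEx ξ) ^ (a - 1)) ∂muEx < ⊤ := by
  rw [lintegral_muEx]
  let K : ℝ → ℝ := fun t => (Real.log t - Real.log Real.pi) ^ (2 * (a - 1)) / t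
  have hK : IntegrableOn K (Ioi 10) := integrableOn_log_sub_rpow_div (by linarith)
  have htail : ∀ ξ : ℝ, 10 < |ξ| → (1 + psiEx ξ) ^ (a - 1) / (1 + |ξ|) ≤ K |ξ| := by
    intro ξ hξ
    have h1 := one_le_log_sub_log_pi hξ.le
    have h2 := sq_log_sub_le_one_add_psiEx (pi_mul_exp_one_lt_ten.le.trans hξ.le)
    rw [psiEx_abs] at h2
    have h3 : (1 + psiEx ξ) ^ (a - 1) ≤
        (Real.log |ξ| - Real.log Real.pi) ^ (2 * (a - 1)) := by
      rw [Real.rpow_mul (by linarith), Real.rpow_two]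
      exact Real.rpow_le_rpow_of_nonpos (by positivity) h2 (by linarith)
    have h4 : 0 ≤ (1 + psiEx ξ) ^ (a - 1) := Real.rpow_nonneg (by linarith [psiEx_nonneg ξ]) _
    refine div_le_div₀ (h4.trans h3) h3 (by linarith) (by linarith)
  have hpos : ∫⁻ ξ in Ioi (10 : ℝ), ENNReal.ofReal ((1 + psiEx ξ) ^ (a - 1) / (1 + |ξ|)) < ⊤ := by
    refine (setLIntegral_mono' measurableSet_Ioi fun ξ hξ => ?_).trans_lt hK.lintegral_lt_top
    have h0 : |ξ| = ξ := abs_of_pos (by linarith [mem_Ioi.1 hξ])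
    have h := htail ξ (by rwa [h0])
    rw [h0] at h ⊢
    exact ENNReal.ofReal_le_ofReal h
  have hneg : ∫⁻ ξ in Iio (-10 : ℝ),
      ENNReal.ofReal ((1 + psiEx ξ) ^ (a - 1) / (1 + |ξ|)) < ⊤ := by
    have h := (Measure.measurePreserving_neg (volume : Measure ℝ)).setLIntegral_comp_preimage_emb
      (MeasurableEquiv.neg ℝ).measurableEmbedding
      (fun ξ => ENNReal.ofReal ((1 + psiEx ξ) ^ (a - 1) / (1 + |ξ|))) (Ioi 10)
    simp only [psiEx_neg, abs_neg] at h
    have hset : Neg.neg ⁻¹' Ioi (10 : ℝ) = Iio (-10) := by simp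
    rw [hset] at h
    rwa [h]
  have hmid : ∫⁻ ξ in Icc (-10 : ℝ) 10,
      ENNReal.ofReal ((1 + psiEx ξ) ^ (a - 1) / (1 + |ξ|)) < ⊤ := by
    refine setLIntegral_lt_top_of_le_nnreal (by simp) ⟨1, fun ξ _ => ?_⟩
    have h1 : (1 + psiEx ξ) ^ (a - 1) ≤ 1 :=
      Real.rpow_le_one_of_one_le_of_nonpos (by linarith [psiEx_nonneg ξ]) (by linarith)
    rw [ENNReal.coe_one, ENNReal.ofReal_le_one]
    exact div_le_one_of_le₀ (by linarith [abs_nonneg ξ]) (by positivity)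
  have hcover : (univ : Set ℝ) = Iio (-10) ∪ Icc (-10) 10 ∪ Ioi 10 := by
    rw [Iio_union_Icc_eq_Iic (by norm_num), Iic_union_Ioi]
  rw [← setLIntegral_univ, hcover]
  refine (lintegral_union_le _ _ _).trans_lt (ENNReal.add_lt_top.2 ⟨?_, hpos⟩)
  exact (lintegral_union_le _ _ _).trans_lt (ENNReal.add_lt_top.2 ⟨hneg, hmid⟩)

theorem lintegral_psiEx_rpow_div_lt_top {a : ℝ} (ha0 : 0 ≤ a) (ha : a < 1 / 2) :
    ∫⁻ ξ, ENNReal.ofReal (psiEx ξ ^ a / (1 + psiEx ξ)) ∂muEx < ⊤ := by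
  refine (lintegral_mono fun ξ => ENNReal.ofReal_le_ofReal ?_).trans_lt
    (lintegral_one_add_psiEx_rpow_lt_top ha)
  have h := psiEx_nonneg ξ
  rw [Real.rpow_sub_one (by linarith)]
  gcongr
  linarith

theorem lintegral_abs_rpow_div_one_add_psiEx_eq_top {b : ℝ} (hb : 0 < b) :
    ∫⁻ ξ, ENNReal.ofReal (|ξ| ^ (2 * b) / (1 + psiEx ξ)) ∂muEx = ⊤ := by
  obtain ⟨C, hC, hψ⟩ := exists_psiEx_le_mul_rpow (lt_min hb one_pos) (min_le_right b 1)
  rw [lintegral_muEx, eq_top_iff]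
  have hdiv : ∫⁻ ξ in Ioi (1 : ℝ), ENNReal.ofReal ((2 * (1 + C))⁻¹ * ξ⁻¹) = ⊤ := by
    by_contra hne
    refine not_integrableOn_Ioi_inv (a := 1) ?_
    have hint : IntegrableOn (fun ξ : ℝ => (2 * (1 + C))⁻¹ * ξ⁻¹) (Ioi 1) := by
      refine (lintegral_ofReal_ne_top_iff_integrable ?_ ?_).1 hne
      · exact Measurable.aestronglyMeasurable (by fun_prop)
      · filter_upwards [ae_restrict_mem measurableSet_Ioi] with ξ hξ
        have : (0 : ℝ) < ξ := one_pos.trans hξ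
        change 0 ≤ (2 * (1 + C))⁻¹ * ξ⁻¹
        positivity
    exact (integrable_const_mul_iff (IsUnit.mk0 _ (by positivity)) _).1 hint
  rw [← hdiv]
  refine le_trans (setLIntegral_mono' measurableSet_Ioi fun ξ hξ => ?_)
    (setLIntegral_le_lintegral _ _)
  have hξ1 : 1 < ξ := hξ
  have hξ0 : 0 < ξ := one_pos.trans hξ1
  refine ENNReal.ofReal_le_ofReal ?_
  rw [abs_of_pos hξ0]
  set m := min b 1
  have hm : 0 ≤ m := (lt_min hb one_pos).le
  have hone : 1 ≤ ξ ^ m := Real.one_le_rpow hξ1.le hm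
  have hmb : m ≤ 2 * b := by linarith [min_le_left b 1]
  have hden : 1 + psiEx ξ ≤ (1 + C) * ξ ^ m := by linarith [hψ ξ hξ0.le]
  have hψ0 := psiEx_nonneg ξ
  calc (2 * (1 + C))⁻¹ * ξ⁻¹ = ξ ^ m / ((1 + C) * ξ ^ m) / (2 * ξ) := by
        field_simp
    _ ≤ ξ ^ (2 * b) / (1 + psiEx ξ) / (1 + ξ) := by
        gcongr
        · exact hξ1.le
        · linarith

/-- Example with `ind_H = 1` and `ind_L = 0` (Proposition 2.1): Dalang's condition
holds, `∫ ψ^a (1+ψ)⁻¹ dμ < ∞` for every `a ∈ (0,1/2)`, and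
`∫ |ξ|^{2b} (1+ψ)⁻¹ dμ = ∞` for every `b > 0`. -/
theorem stmt_19 :
    (∫⁻ ξ, ENNReal.ofReal (1 / (1 + psiEx ξ)) ∂muEx) < ⊤ ∧
    (∀ a ∈ Ioo (0 : ℝ) (1 / 2),
      (∫⁻ ξ, ENNReal.ofReal (psiEx ξ ^ a / (1 + psiEx ξ)) ∂muEx) < ⊤) ∧
    (∀ b : ℝ, 0 < b →
      (∫⁻ ξ, ENNReal.ofReal (|ξ| ^ (2 * b) / (1 + psiEx ξ)) ∂muEx) = ⊤) ∧
    ∃ a ∈ Ioo (0 : ℝ) 1,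
      (∫⁻ ξ, ENNReal.ofReal (psiEx ξ ^ a / (1 + psiEx ξ)) ∂muEx) < ⊤ ∧
        ∀ b ∈ Ioo (0 : ℝ) 1,
          (∫⁻ ξ, ENNReal.ofReal (|ξ| ^ (2 * b) / (1 + psiEx ξ)) ∂muEx) = ⊤ := by
  refine ⟨?_, fun a ha => lintegral_psiEx_rpow_div_lt_top ha.1.le ha.2,
    fun b hb => lintegral_abs_rpow_div_one_add_psiEx_eq_top hb, 1 / 4, by norm_num,
    lintegral_psiEx_rpow_div_lt_top (by norm_num) (by norm_num),
    fun b hb => lintegral_abs_rpow_div_one_add_psiEx_eq_top hb.1⟩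
  simpa using lintegral_psiEx_rpow_div_lt_top le_rfl (by norm_num)
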